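/- Let f(x)=x^6-2x^5+2x^3-2x+1 and g(x)=x^6+x^5+3x^4+2x^3+3x^2+x+1, let A and B be their companion matrices viewed in GL(6,ℚ), and let X be the rational matrix with rows [-3,0,0,0,0,0], [-3,0,0,0,-6,-3], [0,6,0,0,12,-3], [-3,0,0,-12,6,0], [-3,6,12,24,12,-3], [0,0,0,0,0,-3]. Set a = X⁻¹AX, b = X⁻¹BX, and define w₁=[a,b], w₂=[a,b⁻¹], w₃=[b²,a⁻¹], w₄=[w₁,w₂], w₅=[w₃,w₄], where [x,y]=xyx⁻¹y⁻¹. Then q₂ := w₃^180 · w₅ equals the 6×6 matrix I − 1080·E₁₅ + 540·E₂₆, i.e., the identity matrix with additional entries −1080 in position (1,5) and 540 in position (2,6). -/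

import Mathlib

/-!
Everything is an explicit computation in `GL(6, ℚ)`. Conjugation by `matX` makes the short words in
`a` and `b` sparse: `w₃ = 1 + N` with `N = -6 E₁₅ + 6 E₂₅ + 3 E₂₆`, and `w₅ = 1 - 1080 E₂₅`.
As `N ^ 2 = 0`, the powers `w₃ ^ n = 1 + n N` are linear in `n` (`w₃_pow`), and `n = 180` is the
exponent for which the `(2,5)` entry `6 n` of `w₃ ^ n` cancels against that of `w₅`.

Matrix inverses are certified by exhibiting a right inverse and checking one product; the commutators
are then evaluated by multiplying out.
-/

open Matrix

/-- Group commutator [x,y] = x y x⁻¹ y⁻¹ (here for 6×6 rational matrices,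
with ⁻¹ the matrix inverse). -/
noncomputable def com (x y : Matrix (Fin 6) (Fin 6) ℚ) : Matrix (Fin 6) (Fin 6) ℚ :=
  x * y * x⁻¹ * y⁻¹

/-- Companion matrix of f(x)=x⁶-2x⁵+2x³-2x+1, over ℚ. -/
noncomputable def matA : Matrix (Fin 6) (Fin 6) ℚ :=
  !![0,0,0,0,0,-1; 1,0,0,0,0,2; 0,1,0,0,0,0; 0,0,1,0,0,-2; 0,0,0,1,0,0; 0,0,0,0,1,2]

/-- Companion matrix of g(x)=x⁶+x⁵+3x⁴+2x³+3x²+x+1, over ℚ. -/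
noncomputable def matB : Matrix (Fin 6) (Fin 6) ℚ :=
  !![0,0,0,0,0,-1; 1,0,0,0,0,-1; 0,1,0,0,0,-3; 0,0,1,0,0,-2; 0,0,0,1,0,-3; 0,0,0,0,1,-1]

/-- The change of basis matrix X. -/
noncomputable def matX : Matrix (Fin 6) (Fin 6) ℚ :=
  !![-3,0,0,0,0,0; -3,0,0,0,-6,-3; 0,6,0,0,12,-3; -3,0,0,-12,6,0;
     -3,6,12,24,12,-3; 0,0,0,0,0,-3]

noncomputable def a : Matrix (Fin 6) (Fin 6) ℚ := matX⁻¹ * matA * matX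
noncomputable def b : Matrix (Fin 6) (Fin 6) ℚ := matX⁻¹ * matB * matX
noncomputable def w₁ : Matrix (Fin 6) (Fin 6) ℚ := com a b
noncomputable def w₂ : Matrix (Fin 6) (Fin 6) ℚ := com a b⁻¹
noncomputable def w₃ : Matrix (Fin 6) (Fin 6) ℚ := com (b ^ 2) a⁻¹
noncomputable def w₄ : Matrix (Fin 6) (Fin 6) ℚ := com w₁ w₂
noncomputable def w₅ : Matrix (Fin 6) (Fin 6) ℚ := com w₃ w₄

/-- Evaluates a commutator from explicit right inverses of its two arguments. -/
lemma com_eq {x y x' y' z : Matrix (Fin 6) (Fin 6) ℚ} (hx : x * x' = 1) (hy : y * y' = 1)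
    (h : x * y * x' * y' = z) : com x y = z := by
  rw [com, Matrix.inv_eq_right_inv hx, Matrix.inv_eq_right_inv hy, h]

lemma matX_inv : matX⁻¹ =
    !![-1/3,0,0,0,0,0;
       -1/3,1/3,1/6,0,0,-1/2;
       -5/12,1/6,-1/12,1/6,1/12,-1/6;
       1/6,-1/12,0,-1/12,0,1/12;
       1/6,-1/6,0,0,0,1/6;
       0,0,0,0,0,-1/3] := by
  rw [matX]
  apply Matrix.inv_eq_right_inv
  ext i j
  fin_cases i <;> fin_cases j <;> norm_num [Matrix.mul_apply, Fin.sum_univ_succ]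

lemma a_eq : a =
    !![0,0,0,0,0,-1;
       0,-3,-6,-12,-7,1;
       0,0,-2,-5,1,0;
       0,0,1,2,0,0;
       0,1,2,4,2,0;
       1,-2,-4,-8,-4,3] := by
  rw [a, matX_inv, matA, matX]
  rw [← Matrix.ext_iff]
  norm_num [Fin.forall_fin_succ]

lemma b_eq : b =
    !![0,0,0,0,0,-1;
       0,-3,-6,-12,-7,1;
       0,0,-2,-5,1,0;
       0,0,1,2,0,0;
       0,1,2,4,2,0;
       1,-2,-4,-8,-4,0] := by
  rw [b, matX_inv, matB, matX]
  rw [← Matrix.ext_iff]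
  norm_num [Fin.forall_fin_succ]

lemma a_inv : a⁻¹ =
    !![3,0,0,0,2,1;
       2,2,0,-2,7,0;
       2,2,2,5,6,0;
       -1,-1,-1,-2,-3,0;
       -1,-1,0,0,-3,0;
       -1,0,0,0,0,0] := by
  rw [a_eq]
  apply Matrix.inv_eq_right_inv
  ext i j
  fin_cases i <;> fin_cases j <;> norm_num [Matrix.mul_apply, Fin.sum_univ_succ]

lemma b_inv : b⁻¹ =
    !![0,0,0,0,2,1;
       2,2,0,-2,7,0;
       2,2,2,5,6,0;
       -1,-1,-1,-2,-3,0;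
       -1,-1,0,0,-3,0;
       -1,0,0,0,0,0] := by
  rw [b_eq]
  apply Matrix.inv_eq_right_inv
  ext i j
  fin_cases i <;> fin_cases j <;> norm_num [Matrix.mul_apply, Fin.sum_univ_succ]

lemma b_sq : b ^ 2 =
    !![-1,2,4,8,4,0;
       1,0,0,6,-3,-3;
       0,1,1,4,0,0;
       0,0,0,-1,1,0;
       0,-1,-2,-6,-1,1;
       0,2,4,12,2,-3] := by
  rw [b_eq, pow_two]
  rw [← Matrix.ext_iff]
  norm_num [Fin.forall_fin_succ]

lemma w₁_eq : w₁ =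
    !![1,0,0,0,-6,-3;
       0,1,0,0,6,3;
       0,0,1,0,0,0;
       0,0,0,1,0,0;
       0,0,0,0,1,0;
       -3,0,0,0,18,10] := by
  rw [w₁, a_eq, b_eq]
  refine com_eq
    (x' := !![3,0,0,0,2,1;
       2,2,0,-2,7,0;
       2,2,2,5,6,0;
       -1,-1,-1,-2,-3,0;
       -1,-1,0,0,-3,0;
       -1,0,0,0,0,0])
    (y' := !![0,0,0,0,2,1;
       2,2,0,-2,7,0;
       2,2,2,5,6,0;
       -1,-1,-1,-2,-3,0;
       -1,-1,0,0,-3,0;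
       -1,0,0,0,0,0])
    ?_ ?_ ?_
  · ext i j
    fin_cases i <;> fin_cases j <;> norm_num [Matrix.mul_apply, Fin.sum_univ_succ]
  · ext i j
    fin_cases i <;> fin_cases j <;> norm_num [Matrix.mul_apply, Fin.sum_univ_succ]
  · rw [← Matrix.ext_iff]
    norm_num [Fin.forall_fin_succ]

lemma w₂_eq : w₂ =
    !![1,0,0,0,0,-3;
       0,1,0,0,0,0;
       0,0,1,0,0,0;
       0,0,0,1,0,0;
       0,0,0,0,1,0;
       -3,0,0,0,0,10] := by
  rw [w₂, a_eq, b_inv]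
  refine com_eq
    (x' := !![3,0,0,0,2,1;
       2,2,0,-2,7,0;
       2,2,2,5,6,0;
       -1,-1,-1,-2,-3,0;
       -1,-1,0,0,-3,0;
       -1,0,0,0,0,0])
    (y' := !![0,0,0,0,0,-1;
       0,-3,-6,-12,-7,1;
       0,0,-2,-5,1,0;
       0,0,1,2,0,0;
       0,1,2,4,2,0;
       1,-2,-4,-8,-4,0])
    ?_ ?_ ?_
  · ext i j
    fin_cases i <;> fin_cases j <;> norm_num [Matrix.mul_apply, Fin.sum_univ_succ]
  · ext i j
    fin_cases i <;> fin_cases j <;> norm_num [Matrix.mul_apply, Fin.sum_univ_succ]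
  · rw [← Matrix.ext_iff]
    norm_num [Fin.forall_fin_succ]

lemma w₃_eq : w₃ =
    !![1,0,0,0,-6,0;
       0,1,0,0,6,3;
       0,0,1,0,0,0;
       0,0,0,1,0,0;
       0,0,0,0,1,0;
       0,0,0,0,0,1] := by
  rw [w₃, b_sq, a_inv]
  refine com_eq
    (x' := !![-3,-2,0,0,-6,0;
       -1,-1,2,0,3,2;
       -3,-3,-1,-4,-3,2;
       1,1,0,1,0,-1;
       1,1,0,2,0,-1;
       0,0,0,0,-2,-1])
    (y' := !![0,0,0,0,0,-1;
       0,-3,-6,-12,-7,1;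
       0,0,-2,-5,1,0;
       0,0,1,2,0,0;
       0,1,2,4,2,0;
       1,-2,-4,-8,-4,3])
    ?_ ?_ ?_
  · ext i j
    fin_cases i <;> fin_cases j <;> norm_num [Matrix.mul_apply, Fin.sum_univ_succ]
  · ext i j
    fin_cases i <;> fin_cases j <;> norm_num [Matrix.mul_apply, Fin.sum_univ_succ]
  · rw [← Matrix.ext_iff]
    norm_num [Fin.forall_fin_succ]

lemma w₄_eq : w₄ =
    !![1,0,0,0,54,0;
       -90,1,0,0,-54,-27;
       0,0,1,0,0,0;
       0,0,0,1,0,0;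
       0,0,0,0,1,0;
       0,0,0,0,-180,1] := by
  rw [w₄, w₁_eq, w₂_eq]
  refine com_eq
    (x' := !![10,0,0,0,6,3;
       -9,1,0,0,-6,-3;
       0,0,1,0,0,0;
       0,0,0,1,0,0;
       0,0,0,0,1,0;
       3,0,0,0,0,1])
    (y' := !![10,0,0,0,0,3;
       0,1,0,0,0,0;
       0,0,1,0,0,0;
       0,0,0,1,0,0;
       0,0,0,0,1,0;
       3,0,0,0,0,1])
    ?_ ?_ ?_
  · ext i j
    fin_cases i <;> fin_cases j <;> norm_num [Matrix.mul_apply, Fin.sum_univ_succ]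
  · ext i j
    fin_cases i <;> fin_cases j <;> norm_num [Matrix.mul_apply, Fin.sum_univ_succ]
  · rw [← Matrix.ext_iff]
    norm_num [Fin.forall_fin_succ]

lemma w₅_eq : w₅ =
    !![1,0,0,0,0,0;
       0,1,0,0,-1080,0;
       0,0,1,0,0,0;
       0,0,0,1,0,0;
       0,0,0,0,1,0;
       0,0,0,0,0,1] := by
  rw [w₅, w₃_eq, w₄_eq]
  refine com_eq
    (x' := !![1,0,0,0,6,0;
       0,1,0,0,-6,-3;
       0,0,1,0,0,0;
       0,0,0,1,0,0;
       0,0,0,0,1,0;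
       0,0,0,0,0,1])
    (y' := !![1,0,0,0,-54,0;
       90,1,0,0,54,27;
       0,0,1,0,0,0;
       0,0,0,1,0,0;
       0,0,0,0,1,0;
       0,0,0,0,180,1])
    ?_ ?_ ?_
  · ext i j
    fin_cases i <;> fin_cases j <;> norm_num [Matrix.mul_apply, Fin.sum_univ_succ]
  · ext i j
    fin_cases i <;> fin_cases j <;> norm_num [Matrix.mul_apply, Fin.sum_univ_succ]
  · rw [← Matrix.ext_iff]
    norm_num [Fin.forall_fin_succ]

lemma w₃_pow (n : ℕ) : w₃ ^ n =
    !![1,0,0,0,-6*(n : ℚ),0; 0,1,0,0,6*(n : ℚ),3*(n : ℚ); 0,0,1,0,0,0;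
       0,0,0,1,0,0; 0,0,0,0,1,0; 0,0,0,0,0,1] := by
  induction n with
  | zero =>
    ext i j
    fin_cases i <;> fin_cases j <;> simp
  | succ n ih =>
    rw [pow_succ, ih, w₃_eq]
    ext i j
    fin_cases i <;> fin_cases j <;> simp [Matrix.mul_apply, Fin.sum_univ_succ] <;> ring

/-- q₂ = w₃^180 · w₅ is the identity matrix with additional entries
−1080 in position (1,5) and 540 in position (2,6). -/
theorem stmt_14 :
    w₃ ^ 180 * w₅ =
      !![1,0,0,0,-1080,0; 0,1,0,0,0,540; 0,0,1,0,0,0;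
         0,0,0,1,0,0; 0,0,0,0,1,0; 0,0,0,0,0,1] := by
  rw [w₃_pow, w₅_eq]
  ext i j
  fin_cases i <;> fin_cases j <;> norm_num [Matrix.mul_apply, Fin.sum_univ_succ]
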